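/- arXiv:1207.5812 — 2 statements merged into one kernel-verified Lean document; each statement's English description precedes it below -/
import Mathlib

section
/- (Existence of isospectral reductions over any vertex set.) Let G = (V,E,ω) be a weighted digraph in the class G_π and let 𝒱 be a nonempty subset of V. Then there exist sets 𝒱 ⊆ S_{m−1} ⊆ … ⊆ S_1 ⊆ V such that the chain S_1,…,S_{m−1},𝒱 induces a sequence of reductions on G with final vertex set 𝒱. -/
/-!
The vertices outside `V` are removed one at a time. Rational functions whose numerator has degree
at most that of the denominator form a subring of `ℂ(λ)` (`intDegree ≤ 0`) which does not contain
`λ` and which contains `1 / (λ - w)` whenever it contains `w`. So every branch product of a graph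
in `G_π`, and hence every reduction of it, stays in `G_π` (`Gpi_reduce`), and no loop ever has
weight `λ`. The set of remaining vertices minus a single vertex therefore is always a structural
set: a nonloop cycle has at least two vertices, so it meets that set (`isStructuralSet_of_support`).

Reduced matrices are still indexed by all of `Fin n`, with zero rows and columns outside the
remaining vertices, so the induction carries a support hypothesis along.
-/

open scoped BigOperators

abbrev Wl : Type := RatFunc ℂ

def IsCycle {n : ℕ} (A : Matrix (Fin n) (Fin n) Wl) (l : List (Fin n)) : Prop :=
  l ≠ [] ∧ l.Nodup ∧ l.Chain' (fun u v => A u v ≠ 0) ∧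
    ∀ u v : Fin n, l.head? = some u → l.getLast? = some v → A v u ≠ 0

def IsStructuralSet {n : ℕ} (A : Matrix (Fin n) (Fin n) Wl) (S : Finset (Fin n)) : Prop :=
  S.Nonempty ∧ (∀ l, IsCycle A l → 2 ≤ l.length → ∃ v ∈ l, v ∈ S) ∧
    ∀ i, i ∉ S → A i i ≠ RatFunc.X

def IsBranch {n : ℕ} (A : Matrix (Fin n) (Fin n) Wl) (S : Finset (Fin n)) (i j : Fin n)
    (l : List (Fin n)) : Prop :=
  2 ≤ l.length ∧ l.head? = some i ∧ l.getLast? = some j ∧ i ∈ S ∧ j ∈ S ∧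
    l.Chain' (fun u v => A u v ≠ 0) ∧ (∀ v ∈ l.tail.dropLast, v ∉ S) ∧
    l.dropLast.Nodup ∧ l.tail.Nodup

noncomputable def innerProd {n : ℕ} (A : Matrix (Fin n) (Fin n) Wl) : List (Fin n) → Wl
  | u :: v :: rest => A u v / (RatFunc.X - A u u) * innerProd A (v :: rest)
  | _ => 1

noncomputable def branchProd {n : ℕ} (A : Matrix (Fin n) (Fin n) Wl) : List (Fin n) → Wl
  | u :: v :: rest => A u v * innerProd A (v :: rest)
  | _ => 0

noncomputable def reduce {n : ℕ} (A : Matrix (Fin n) (Fin n) Wl) (S : Finset (Fin n)) :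
    Matrix (Fin n) (Fin n) Wl :=
  Matrix.of fun i j => ∑ᶠ l ∈ {l : List (Fin n) | IsBranch A S i j l}, branchProd A l

noncomputable def charRat {V : Type} [Fintype V] [DecidableEq V] (A : Matrix V V Wl) : Wl :=
  (A - Matrix.diagonal (fun _ => (RatFunc.X : Wl))).det

noncomputable def spec {V : Type} [Fintype V] [DecidableEq V] (A : Matrix V V Wl) : Multiset ℂ :=
  (charRat A).num.roots - (charRat A).denom.roots

noncomputable def ispec {V : Type} [Fintype V] [DecidableEq V] (A : Matrix V V Wl) : Multiset ℂ :=
  (charRat A).denom.roots - (charRat A).num.roots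

noncomputable def reduceSub {n : ℕ} (A : Matrix (Fin n) (Fin n) Wl) (S : Finset (Fin n)) :
    Matrix {i // i ∈ S} {i // i ∈ S} Wl :=
  (reduce A S).submatrix Subtype.val Subtype.val

def restrictC {n : ℕ} (A : Matrix (Fin n) (Fin n) Wl) (S : Finset (Fin n)) :
    Matrix {i // i ∈ Sᶜ} {i // i ∈ Sᶜ} Wl :=
  A.submatrix Subtype.val Subtype.val

/-- `w ∈ W_π`: the degree of the numerator is at most the degree of the denominator
(numerator and denominator are in lowest terms). -/
def Wpi (w : Wl) : Prop := w.num.degree ≤ w.denom.degree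

/-- `G ∈ G_π`: every edge weight lies in `W_π`. -/
def Gpi {n : ℕ} (A : Matrix (Fin n) (Fin n) Wl) : Prop := ∀ i j, Wpi (A i j)

/-- `S_1, …, S_m` induces a sequence of reductions on `G`: each `S_{i+1}` is a
structural set of the `i`-th sequential reduction. -/
def Induces {n : ℕ} : Matrix (Fin n) (Fin n) Wl → List (Finset (Fin n)) → Prop
  | _, [] => True
  | A, S :: rest => IsStructuralSet A S ∧ Induces (reduce A S) rest

/-- The result `R(G; S_1, …, S_m)` of the sequence of reductions. -/
noncomputable def reduceSeq {n : ℕ} :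
    Matrix (Fin n) (Fin n) Wl → List (Finset (Fin n)) → Matrix (Fin n) (Fin n) Wl
  | A, [] => A
  | A, S :: rest => reduceSeq (reduce A S) rest

lemma Wpi_iff (w : Wl) : Wpi w ↔ w.intDegree ≤ 0 := by
  unfold Wpi RatFunc.intDegree
  have hd : w.denom ≠ 0 := w.denom_ne_zero
  rw [Polynomial.degree_eq_natDegree hd, ← Polynomial.natDegree_le_iff_degree_le]
  omega

lemma Wpi_zero : Wpi 0 := by simp [Wpi_iff]

lemma Wpi_one : Wpi 1 := by simp [Wpi_iff]

lemma Wpi_add {x y : Wl} (hx : Wpi x) (hy : Wpi y) : Wpi (x + y) := by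
  by_cases h0 : y = 0
  · simpa [h0] using hx
  by_cases h1 : x + y = 0
  · rw [h1]; exact Wpi_zero
  rw [Wpi_iff] at *
  exact (RatFunc.intDegree_add_le h0 h1).trans (max_le hx hy)

lemma Wpi_mul {x y : Wl} (hx : Wpi x) (hy : Wpi y) : Wpi (x * y) := by
  by_cases h0 : x = 0
  · simpa [h0] using Wpi_zero
  by_cases h1 : y = 0
  · simpa [h1] using Wpi_zero
  rw [Wpi_iff] at *
  rw [RatFunc.intDegree_mul h0 h1]
  omega

lemma not_Wpi_X : ¬ Wpi (RatFunc.X : Wl) := by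
  simp [Wpi_iff]

/-- If `1 / (λ - w)` had positive degree, then `λ - w` would have negative degree and
`λ = (λ - w) + w` would have degree at most `0`. -/
lemma Wpi_inv_X_sub {w : Wl} (hw : Wpi w) : Wpi (RatFunc.X - w)⁻¹ := by
  by_contra h
  apply not_Wpi_X
  have hz : Wpi (RatFunc.X - w) := by
    rw [Wpi_iff] at *
    rw [RatFunc.intDegree_inv] at h
    omega
  simpa using Wpi_add hz hw

lemma Wpi_innerProd {n : ℕ} {A : Matrix (Fin n) (Fin n) Wl} (hA : Gpi A) :
    ∀ l : List (Fin n), Wpi (innerProd A l)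
  | [] => Wpi_one
  | [_] => Wpi_one
  | u :: v :: rest => by
    rw [innerProd, div_eq_mul_inv]
    exact Wpi_mul (Wpi_mul (hA u v) (Wpi_inv_X_sub (hA u u))) (Wpi_innerProd hA (v :: rest))

lemma Wpi_branchProd {n : ℕ} {A : Matrix (Fin n) (Fin n) Wl} (hA : Gpi A) :
    ∀ l : List (Fin n), Wpi (branchProd A l)
  | [] => Wpi_zero
  | [_] => Wpi_zero
  | u :: v :: rest => Wpi_mul (hA u v) (Wpi_innerProd hA (v :: rest))

lemma Gpi_reduce {n : ℕ} {A : Matrix (Fin n) (Fin n) Wl} (hA : Gpi A) (S : Finset (Fin n)) :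
    Gpi (reduce A S) := fun _ _ =>
  finsum_mem_induction Wpi Wpi_zero (fun _ _ => Wpi_add) fun l _ => Wpi_branchProd hA l

lemma reduce_support {n : ℕ} (A : Matrix (Fin n) (Fin n) Wl) (S : Finset (Fin n))
    (i j : Fin n) (h : reduce A S i j ≠ 0) : i ∈ S ∧ j ∈ S := by
  by_contra hij
  apply h
  simp only [reduce, Matrix.of_apply]
  refine finsum_mem_eq_zero_of_forall_eq_zero fun l hl => ?_
  exact absurd ⟨hl.2.2.2.1, hl.2.2.2.2.1⟩ hij

/-- Every vertex of a cycle is the source of an edge. -/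
lemma IsCycle.exists_edge {n : ℕ} {A : Matrix (Fin n) (Fin n) Wl} {l : List (Fin n)}
    (hl : IsCycle A l) {u : Fin n} (hu : u ∈ l) : ∃ v, A u v ≠ 0 := by
  obtain ⟨-, -, hc, hlast⟩ := hl
  obtain ⟨s, t, rfl⟩ := List.append_of_mem hu
  cases t with
  | nil =>
    cases s with
    | nil => exact ⟨u, hlast u u (by simp) (by simp)⟩
    | cons a s => exact ⟨a, hlast a u (by simp) List.getLast?_concat⟩
  | cons b t =>
    have := List.IsChain.right_of_append hc
    exact ⟨b, (List.isChain_cons_cons.1 this).1⟩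

/-- A set containing all but at most one of the vertices that carry edges is structural. -/
lemma isStructuralSet_of_support {n : ℕ} {A : Matrix (Fin n) (Fin n) Wl} (hA : Gpi A)
    {T : Finset (Fin n)} (hT : T.Nonempty) (v : Fin n)
    (hs : ∀ i j, A i j ≠ 0 → i ≠ v → i ∈ T) : IsStructuralSet A T := by
  refine ⟨hT, fun l hl hlen => ?_, fun i _ h => not_Wpi_X (h ▸ hA i i)⟩
  obtain ⟨u, hu, huv⟩ : ∃ u ∈ l, u ≠ v := by
    match l, hlen, hl.2.1 with
    | a :: b :: t, _, hnd =>
      by_cases ha : a = v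
      · refine ⟨b, by simp, ?_⟩
        rintro rfl
        simp [ha] at hnd
      · exact ⟨a, by simp, ha⟩
  obtain ⟨w, hw⟩ := hl.exists_edge hu
  exact ⟨u, hu, hs u w hw huv⟩

/-- The induction on the number of vertices of `S` still to be removed; `S` is the vertex set of
the current graph. -/
lemma exists_chain {n : ℕ} (V : Finset (Fin n)) (hV : V.Nonempty) (k : ℕ) :
    ∀ (S : Finset (Fin n)) (A : Matrix (Fin n) (Fin n) Wl), (S \ V).card = k → V ⊆ S → Gpi A →
      (∀ i j, A i j ≠ 0 → i ∈ S) →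
      ∃ L : List (Finset (Fin n)), L.getLast? = some V ∧
        (S :: L).IsChain (fun s t => t ⊆ s) ∧ Induces A L := by
  induction k with
  | zero =>
    intro S A hk hVS hA hs
    have hSV : S ⊆ V := by simpa [Finset.card_eq_zero] using hk
    obtain ⟨v, hv⟩ := hV
    exact ⟨[V], by simp, by simpa using hVS,
      isStructuralSet_of_support hA ⟨v, hv⟩ v fun i j h _ => hSV (hs i j h), trivial⟩
  | succ k ih =>
    intro S A hk hVS hA hs
    obtain ⟨v, hv⟩ : (S \ V).Nonempty := Finset.card_pos.1 (by omega)
    obtain ⟨hvS, hvV⟩ := Finset.mem_sdiff.1 hv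
    have hVT : V ⊆ S.erase v := fun x hx =>
      Finset.mem_erase.2 ⟨fun h => hvV (h ▸ hx), hVS hx⟩
    obtain ⟨L, hL, hc, hi⟩ := ih (S.erase v) (reduce A (S.erase v))
      (by rw [Finset.erase_sdiff_comm, Finset.card_erase_of_mem hv]; omega) hVT
      (Gpi_reduce hA _) fun i j h => (reduce_support A _ i j h).1
    refine ⟨S.erase v :: L, ?_, ?_, ?_, hi⟩
    · rw [List.getLast?_cons, hL]; rfl
    · exact List.isChain_cons_cons.2 ⟨Finset.erase_subset _ _, hc⟩
    · exact isStructuralSet_of_support hA (hV.mono hVT) v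
        fun i j h hne => Finset.mem_erase.2 ⟨hne, hs i j h⟩

theorem stmt4 {n : ℕ} (A : Matrix (Fin n) (Fin n) Wl) (hA : Gpi A)
    (V : Finset (Fin n)) (hV : V.Nonempty) :
    ∃ L : List (Finset (Fin n)),
      L.getLast? = some V ∧ L.Chain' (fun s t => t ⊆ s) ∧ Induces A L := by
  obtain ⟨L, hL, hc, hi⟩ := exists_chain V hV _ Finset.univ A rfl (Finset.subset_univ _) hA
    fun i _ _ => Finset.mem_univ i
  exact ⟨L, hL, hc.tail, hi⟩
end

section
/- (Uniqueness of isospectral reductions over any vertex set.) Let G = (V,E,ω) be a weighted digraph in the class G_π and let 𝒱 be a nonempty subset of V. If S_1,…,S_{m−1},𝒱 and T_1,…,T_{n−1},𝒱 both induce sequences of reductions on G, then the resulting reduced graphs are equal: R(G; S_1,…,S_{m−1},𝒱) = R(G; T_1,…,T_{n−1},𝒱) (their weighted adjacency matrices on 𝒱 coincide entrywise). -/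
/-!
The reduction over `S` is a Schur complement: solving the eigenvector equation
`∑ k, A c k * x k = λ * x c` at the removed vertices `c ∉ S` in terms of the values of `x` on `S`
and substituting into the rows of `S` gives the matrix `reduce A S`.  The predicate `Eliminates`
records this without inverting anything: every vector extends from `S` to a vector solving the
equations off `S`, and on the rows of `S` the reduced matrix acts as `A` acts on the extension.

* `eliminates_reduce`: for a structural set `S`, the reduced matrix eliminates the vertices off
  `S`.  The extension is `x c = ∑ j, pathSum A S c j * z j`, where `pathSum` sums the weights of
  the paths from `c` to `j` whose only vertex in `S` is `j`.  Splitting off the first edge gives the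
  equations; prepending a vertex never breaks simplicity, because a repeated vertex would
  produce a nontrivial cycle avoiding `S`.
* `Eliminates.trans`: the relation composes along `V ⊆ S`, so it holds for any induced sequence.
* `eq_zero_of_gpi`: for `A` in `G_π` the extension is unique.  At the place at infinity the entries
  of `A` have valuation at most one while `λ` has valuation larger than one, so a nonzero
  vector vanishing on `V` cannot satisfy `(A x)_c = λ x_c` at an entry of maximal valuation.

Hence both reduced matrices act in the same way on all vectors.
-/

open scoped BigOperators

/-! ### Paths leading into the structural set -/

/-- `l` is a path from `c` to `j ∈ S` whose vertices other than `j` lie outside `S`. The one-vertex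
path `[j]` is allowed. -/
def IsPathTo {n : ℕ} (A : Matrix (Fin n) (Fin n) Wl) (S : Finset (Fin n)) (c j : Fin n)
    (l : List (Fin n)) : Prop :=
  l.head? = some c ∧ l.getLast? = some j ∧ j ∈ S ∧ l.IsChain (fun u v => A u v ≠ 0) ∧
    l.Nodup ∧ ∀ v ∈ l.dropLast, v ∉ S

/-- The total weight of the paths from `c` to `j` counted by `IsPathTo`, each vertex other than the
endpoint `j` contributing its denominator `λ - A u u`. -/
noncomputable def pathSum {n : ℕ} (A : Matrix (Fin n) (Fin n) Wl) (S : Finset (Fin n))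
    (c j : Fin n) : Wl :=
  ∑ᶠ l ∈ {l | IsPathTo A S c j l}, innerProd A l

lemma finite_isPathTo {n : ℕ} (A : Matrix (Fin n) (Fin n) Wl) (S : Finset (Fin n))
    (c j : Fin n) : {l | IsPathTo A S c j l}.Finite := by
  refine (List.finite_length_le (Fin n) n).subset fun l hl => ?_
  simpa using hl.2.2.2.2.1.length_le_card

/-- A sum over lists with first vertex `i` splits according to the second vertex `k`. -/
lemma finsum_cons {n : ℕ} (i : Fin n) (D : Fin n → Set (List (Fin n)))
    (hfin : ∀ k, (D k).Finite) (hhead : ∀ k, ∀ l ∈ D k, l.head? = some k)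
    (f : List (Fin n) → Wl) :
    ∑ᶠ l ∈ {l | ∃ k, ∃ l' ∈ D k, l = i :: l'}, f l = ∑ k, ∑ᶠ l ∈ D k, f (i :: l) := by
  have hset : {l | ∃ k, ∃ l' ∈ D k, l = i :: l'} = ⋃ k, (List.cons i) '' D k := by
    ext l
    simp only [Set.mem_ofPred_eq, Set.mem_iUnion, Set.mem_image, eq_comm]
  rw [hset, finsum_mem_iUnion, finsum_eq_sum_of_fintype]
  · refine Finset.sum_congr rfl fun k _ => ?_
    rw [finsum_mem_image]
    exact (List.cons_injective).injOn
  · intro k k' hkk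
    rw [Function.onFun, Set.disjoint_left]
    rintro _ ⟨l, hl, rfl⟩ ⟨l', hl', h⟩
    have h' : l' = l := by simpa using h
    subst h'
    have h1 := hhead _ _ hl
    have h2 := hhead _ _ hl'
    rw [h1] at h2
    exact hkk (by simpa using h2)
  · intro k
    exact (hfin k).image _

lemma pathSum_of_mem {n : ℕ} (A : Matrix (Fin n) (Fin n) Wl) (S : Finset (Fin n))
    {c : Fin n} (hc : c ∈ S) (j : Fin n) : pathSum A S c j = if c = j then 1 else 0 := by
  unfold pathSum
  have hset : {l | IsPathTo A S c j l} = if c = j then {[j]} else ∅ := by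
    ext l
    constructor
    · rintro ⟨h1, h2, -, -, -, h6⟩
      match l, h1, h2, h6 with
      | [a], h1, h2, h6 => simp_all
      | a :: b :: r, h1, h2, h6 =>
        simp only [List.head?_cons, Option.some.injEq] at h1
        subst h1
        exact absurd hc (h6 a (by simp))
    · split_ifs with h
      · rintro rfl
        subst h
        simp [IsPathTo, hc]
      · simp
  rw [hset]
  split_ifs <;> simp [innerProd]

/-- Prepending `c ∉ S` to a path into `S` starting at an out-neighbour `k ≠ c` cannot repeat `c`: the
part of the path up to `c` would close up to a nontrivial cycle avoiding `S`. -/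
lemma not_mem_of_isPathTo {n : ℕ} {A : Matrix (Fin n) (Fin n) Wl} {S : Finset (Fin n)}
    (hS : IsStructuralSet A S) {c k j : Fin n} (hc : c ∉ S) (hk : k ≠ c) (hA : A c k ≠ 0)
    {l : List (Fin n)} (hl : IsPathTo A S k j l) : c ∉ l := by
  intro hcl
  obtain ⟨h1, h2, h3, h4, h5, h6⟩ := hl
  obtain ⟨l1, l2, rfl⟩ := List.append_of_mem hcl
  have hl1 : l1 ≠ [] := by
    rintro rfl
    simp at h1
    exact hk h1.symm
  have hl2 : l2 ≠ [] := by
    rintro rfl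
    simp at h2
    exact hc (h2 ▸ h3)
  have happ : l1 ++ c :: l2 = (l1 ++ [c]) ++ l2 := by simp
  rw [happ] at h1 h4 h5 h6
  obtain ⟨v, hv, hvS⟩ := hS.2.1 (l1 ++ [c])
    ⟨by simp, (List.nodup_append.1 h5).1, h4.left_of_append, by
      intro u v hu hv
      rw [List.head?_append_of_ne_nil _ (by simp), hu] at h1
      simp at h1 hv
      subst h1 hv
      exact hA⟩
    (by
      have := List.length_pos_of_ne_nil hl1
      simp
      omega)
  refine h6 v ?_ hvS
  rw [List.dropLast_append_of_ne_nil hl2]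
  exact List.mem_append_left _ hv

lemma pathSum_of_notMem {n : ℕ} {A : Matrix (Fin n) (Fin n) Wl} {S : Finset (Fin n)}
    (hS : IsStructuralSet A S) {c : Fin n} (hc : c ∉ S) (j : Fin n) :
    ∑ k, A c k * pathSum A S k j = RatFunc.X * pathSum A S c j := by
  have hne : RatFunc.X - A c c ≠ 0 := sub_ne_zero.2 (hS.2.2 c hc).symm
  have key : pathSum A S c j =
      ∑ k, if k = c then 0 else A c k / (RatFunc.X - A c c) * pathSum A S k j := by
    have hset : {l | IsPathTo A S c j l} = {l | ∃ k, ∃ l' ∈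
        {l' | (k ≠ c ∧ A c k ≠ 0) ∧ IsPathTo A S k j l'}, l = c :: l'} := by
      ext l
      constructor
      · rintro ⟨h1, h2, h3, h4, h5, h6⟩
        match l, h1, h2, h4, h5, h6 with
        | [a], h1, h2, h4, h5, h6 =>
          simp at h1 h2
          subst h1 h2
          exact absurd h3 hc
        | a :: b :: r, h1, h2, h4, h5, h6 =>
          simp only [List.head?_cons, Option.some.injEq] at h1
          subst h1
          refine ⟨b, b :: r, ⟨⟨?_, ?_⟩, rfl, ?_, h3, ?_, ?_, ?_⟩, rfl⟩
          · rintro rfl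
            simp at h5
          · exact (List.isChain_cons_cons.1 h4).1
          · simpa using h2
          · exact (List.isChain_cons_cons.1 h4).2
          · exact (List.nodup_cons.1 h5).2
          · intro v hv
            exact h6 v (by simp [hv])
      · rintro ⟨k, l', ⟨⟨hk, hA⟩, hl'⟩, rfl⟩
        have hnot := not_mem_of_isPathTo hS hc hk hA hl'
        obtain ⟨h1, h2, h3, h4, h5, h6⟩ := hl'
        match l', h1, h2, h4, h5, h6, hnot with
        | b :: r, h1, h2, h4, h5, h6, hnot =>
          simp only [List.head?_cons, Option.some.injEq] at h1
          subst h1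
          refine ⟨rfl, by simpa using h2, h3, List.isChain_cons_cons.2 ⟨hA, h4⟩,
            List.nodup_cons.2 ⟨hnot, h5⟩, ?_⟩
          intro v hv
          simp only [List.dropLast_cons_cons, List.mem_cons] at hv
          rcases hv with rfl | hv
          · exact hc
          · exact h6 v hv
    conv_lhs => unfold pathSum
    rw [hset, finsum_cons]
    · refine Finset.sum_congr rfl fun k _ => ?_
      split_ifs with hk
      · simp [hk]
      · by_cases hA : A c k = 0
        · simp [hA]
        · simp only [ne_eq, hk, hA, not_false_eq_true, true_and, and_true]
          rw [pathSum, mul_finsum_mem' _ _ (finite_isPathTo A S k j)]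
          refine finsum_mem_congr rfl fun l hl => ?_
          have h1 := hl.1
          match l, h1 with
          | b :: r, h1 =>
            simp only [List.head?_cons, Option.some.injEq] at h1
            subst h1
            rfl
    · intro k
      exact (finite_isPathTo A S k j).subset fun l hl => hl.2
    · intro k l hl
      exact hl.2.1
  have key2 : (RatFunc.X - A c c) * pathSum A S c j =
      ∑ k, if k = c then 0 else A c k * pathSum A S k j := by
    conv_lhs => rw [key]
    rw [Finset.mul_sum]
    refine Finset.sum_congr rfl fun k _ => ?_
    split_ifs
    · simp
    · field_simp
  have h3 : ∑ k, A c k * pathSum A S k j = A c c * pathSum A S c j +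
      ∑ k, if k = c then 0 else A c k * pathSum A S k j := by
    rw [← Finset.add_sum_erase _ _ (Finset.mem_univ c),
      ← Finset.add_sum_erase (a := c) _ (fun k => if k = c then 0 else _) (Finset.mem_univ c)]
    simp only [if_true, zero_add]
    congr 1
    refine Finset.sum_congr rfl fun k hk => ?_
    rw [if_neg (Finset.ne_of_mem_erase hk)]
  rw [h3, ← key2]
  ring

lemma reduce_of_notMem {n : ℕ} (A : Matrix (Fin n) (Fin n) Wl) (S : Finset (Fin n))
    {i : Fin n} (hi : i ∉ S) (j : Fin n) : reduce A S i j = 0 := by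
  have hset : {l | IsBranch A S i j l} = ∅ :=
    Set.eq_empty_of_forall_notMem fun l hl => hi hl.2.2.2.1
  rw [reduce, Matrix.of_apply, hset, finsum_mem_empty]

lemma reduce_of_mem {n : ℕ} (A : Matrix (Fin n) (Fin n) Wl) (S : Finset (Fin n))
    {i : Fin n} (hi : i ∈ S) (j : Fin n) :
    reduce A S i j = ∑ k, A i k * pathSum A S k j := by
  have hset : {l | IsBranch A S i j l} = {l | ∃ k, ∃ l' ∈
      {l' | A i k ≠ 0 ∧ IsPathTo A S k j l'}, l = i :: l'} := by
    ext l
    constructor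
    · rintro ⟨h0, h1, h2, -, h3, h4, h6, h7, h8⟩
      match l, h0, h1, h2, h4, h6, h7, h8 with
      | a :: b :: r, h0, h1, h2, h4, h6, h7, h8 =>
        simp only [List.head?_cons, Option.some.injEq] at h1
        subst h1
        exact ⟨b, b :: r, ⟨(List.isChain_cons_cons.1 h4).1, rfl, by simpa using h2, h3,
          (List.isChain_cons_cons.1 h4).2, h8, h6⟩, rfl⟩
    · rintro ⟨k, l', ⟨hA, h1, h2, h3, h4, h5, h6⟩, rfl⟩
      match l', h1, h2, h4, h5, h6 with
      | b :: r, h1, h2, h4, h5, h6 =>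
        simp only [List.head?_cons, Option.some.injEq] at h1
        subst h1
        refine ⟨by simp, rfl, by simpa using h2, hi, h3, List.isChain_cons_cons.2 ⟨hA, h4⟩,
          h6, ?_, h5⟩
        rw [List.dropLast_cons_cons, List.nodup_cons]
        exact ⟨fun h => h6 i h hi, h5.sublist (List.dropLast_sublist _)⟩
  rw [reduce, Matrix.of_apply, hset, finsum_cons]
  · refine Finset.sum_congr rfl fun k _ => ?_
    by_cases hA : A i k = 0
    · simp [hA]
    · simp only [ne_eq, hA, not_false_eq_true, true_and]
      rw [pathSum, mul_finsum_mem' _ _ (finite_isPathTo A S k j)]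
      refine finsum_mem_congr rfl fun l hl => ?_
      have h1 := hl.1
      match l, h1 with
      | b :: r, h1 =>
        simp only [List.head?_cons, Option.some.injEq] at h1
        subst h1
        rfl
  · intro k
    exact (finite_isPathTo A S k j).subset fun l hl => hl.2
  · intro k l hl
    exact hl.2.1

/-! ### Elimination of the vertices outside a set -/

/-- `R` is obtained from `A` by eliminating the vertices outside `V` from the eigenvector equation:
`R` has no nonzero row outside `V`, and every `z` agrees on `V` with some `x` which satisfies
`A x = λ x` outside `V` and for which `A x = R z` on `V`. -/
def Eliminates {n : ℕ} (A : Matrix (Fin n) (Fin n) Wl) (V : Finset (Fin n))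
    (R : Matrix (Fin n) (Fin n) Wl) : Prop :=
  (∀ i ∉ V, ∀ j, R i j = 0) ∧ ∀ z : Fin n → Wl, ∃ x : Fin n → Wl,
    (∀ i ∈ V, x i = z i) ∧ (∀ i ∉ V, ∑ k, A i k * x k = RatFunc.X * x i) ∧
      ∀ i ∈ V, ∑ k, A i k * x k = ∑ k, R i k * z k

lemma eliminates_reduce {n : ℕ} {A : Matrix (Fin n) (Fin n) Wl} {S : Finset (Fin n)}
    (hS : IsStructuralSet A S) : Eliminates A S (reduce A S) := by
  refine ⟨fun i hi j => reduce_of_notMem A S hi j, fun z =>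
    ⟨fun c => ∑ j, pathSum A S c j * z j, ?_, ?_, ?_⟩⟩
  · intro i hi
    simp [pathSum_of_mem A S hi]
  all_goals
    intro i hi
    have hswap : ∑ k, A i k * ∑ j, pathSum A S k j * z j =
        ∑ j, (∑ k, A i k * pathSum A S k j) * z j := by
      simp only [Finset.mul_sum, Finset.sum_mul, mul_assoc]
      exact Finset.sum_comm
    rw [hswap]
  · simp only [pathSum_of_notMem hS hi, Finset.mul_sum, mul_assoc]
  · simp only [reduce_of_mem A S hi]

lemma Eliminates.trans {n : ℕ} {A R R' : Matrix (Fin n) (Fin n) Wl} {S V : Finset (Fin n)}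
    (h : Eliminates A S R) (h' : Eliminates R V R') (hVS : V ⊆ S) : Eliminates A V R' := by
  refine ⟨h'.1, fun z => ?_⟩
  obtain ⟨x, hx1, hx2, hx3⟩ := h'.2 z
  obtain ⟨y, hy1, hy2, hy3⟩ := h.2 x
  refine ⟨y, fun i hi => (hy1 i (hVS hi)).trans (hx1 i hi), fun i hi => ?_,
    fun i hi => (hy3 i (hVS hi)).trans (hx3 i hi)⟩
  by_cases hiS : i ∈ S
  · rw [hy3 i hiS, hx2 i hi, hy1 i hiS]
  · exact hy2 i hiS

lemma eliminates_reduceSeq {n : ℕ} (V : Finset (Fin n)) (L : List (Finset (Fin n))) :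
    ∀ A : Matrix (Fin n) (Fin n) Wl, L.getLast? = some V →
      L.IsChain (fun s t => t ⊆ s) → Induces A L → Eliminates A V (reduceSeq A L) := by
  induction L with
  | nil => simp
  | cons S L ih =>
    intro A hlast hchain hind
    match L, ih, hlast, hchain, hind with
    | [], _, hlast, _, hind =>
      simp at hlast
      subst hlast
      exact eliminates_reduce hind.1
    | T :: L, ih, hlast, hchain, hind =>
      have hlast' : (T :: L).getLast? = some V := by simpa using hlast
      refine (eliminates_reduce hind.1).trans
        (ih _ hlast' (List.isChain_cons_cons.1 hchain).2 hind.2) ?_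
      have hp : (S :: T :: L).Pairwise (fun s t => t ⊆ s) := by
        have : IsTrans (Finset (Fin n)) (fun s t => t ⊆ s) := ⟨fun _ _ _ h h' => h'.trans h⟩
        exact List.isChain_iff_pairwise.1 hchain
      exact (List.pairwise_cons.1 hp).1 V (List.mem_of_getLast? hlast')

/-! ### Uniqueness via the place at infinity -/

open scoped Classical in
open RatFunc in
lemma valuation_le_one_of_wpi {w : Wl} (hw : Wpi w) : inftyValuation ℂ w ≤ 1 := by
  by_cases h : w = 0
  · simp [h]
  · rw [inftyValuation_apply, inftyValuation_of_nonzero ℂ h, RatFunc.intDegree,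
      ← WithZero.exp_zero, WithZero.exp_le_exp]
    have := Polynomial.natDegree_le_natDegree hw
    omega

open scoped Classical in
/-- At an entry of maximal valuation the eigenvector equation fails, since `λ` has valuation larger
than one at infinity. -/
lemma eq_zero_of_gpi {n : ℕ} {A : Matrix (Fin n) (Fin n) Wl} (hA : Gpi A)
    {V : Finset (Fin n)} {x : Fin n → Wl} (hx : ∀ i ∈ V, x i = 0)
    (hx' : ∀ i ∉ V, ∑ k, A i k * x k = RatFunc.X * x i) (i : Fin n) : x i = 0 := by
  obtain ⟨m, -, hm⟩ := Finset.exists_max_image Finset.univ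
    (fun k => RatFunc.inftyValuation ℂ (x k)) ⟨i, Finset.mem_univ i⟩
  have hxm : x m = 0 := by
    by_contra hne
    have hmV : m ∉ V := fun h => hne (hx m h)
    have hle : RatFunc.inftyValuation ℂ (∑ k, A m k * x k) ≤
        RatFunc.inftyValuation ℂ (x m) := by
      refine Valuation.map_sum_le _ fun k _ => ?_
      rw [map_mul]
      exact (mul_le_of_le_one_left' (valuation_le_one_of_wpi (hA m k))).trans
        (hm k (Finset.mem_univ k))
    have hpos : 0 < RatFunc.inftyValuation ℂ (x m) :=
      zero_lt_iff.2 ((Valuation.ne_zero_iff _).2 hne)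
    rw [hx' m hmV, map_mul] at hle
    have hX : 1 < RatFunc.inftyValuation ℂ (RatFunc.X : Wl) := by
      rw [RatFunc.inftyValuation.X, ← WithZero.exp_zero, WithZero.exp_lt_exp]
      norm_num
    have hlt := mul_lt_mul_of_pos_right hX hpos
    rw [one_mul] at hlt
    exact absurd hle (not_le.2 hlt)
  have := hm i (Finset.mem_univ i)
  simpa [hxm] using this

lemma Eliminates.unique {n : ℕ} {A R R' : Matrix (Fin n) (Fin n) Wl} (hA : Gpi A)
    {V : Finset (Fin n)} (h : Eliminates A V R) (h' : Eliminates A V R') : R = R' := by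
  ext i j
  by_cases hi : i ∈ V
  · obtain ⟨x, hx1, hx2, hx3⟩ := h.2 (Pi.single j 1)
    obtain ⟨y, hy1, hy2, hy3⟩ := h'.2 (Pi.single j 1)
    have hxy : x = y := by
      funext k
      refine sub_eq_zero.1 (eq_zero_of_gpi hA (V := V) (x := fun k => x k - y k) ?_ ?_ k)
      · intro k hk
        simp only [hx1 k hk, hy1 k hk, sub_self]
      · intro k hk
        simp only [mul_sub, Finset.sum_sub_distrib, hx2 k hk, hy2 k hk]
    have := (hx3 i hi).symm.trans (hxy ▸ hy3 i hi)
    simpa [Pi.single_apply] using this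
  · rw [h.1 i hi, h'.1 i hi]

theorem stmt5 {n : ℕ} (A : Matrix (Fin n) (Fin n) Wl) (hA : Gpi A)
    (V : Finset (Fin n)) (hV : V.Nonempty) (L₁ L₂ : List (Finset (Fin n)))
    (h₁last : L₁.getLast? = some V) (h₁chain : L₁.Chain' (fun s t => t ⊆ s))
    (h₁ : Induces A L₁)
    (h₂last : L₂.getLast? = some V) (h₂chain : L₂.Chain' (fun s t => t ⊆ s))
    (h₂ : Induces A L₂) :
    reduceSeq A L₁ = reduceSeq A L₂ :=
  (eliminates_reduceSeq V L₁ A h₁last h₁chain h₁).unique hA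
    (eliminates_reduceSeq V L₂ A h₂last h₂chain h₂)
end
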